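/- arXiv:1004.4530 — 2 statements merged into one kernel-verified Lean document; each statement's English description precedes it below -/
import Mathlib

section
/- For every finite set 𝒮, every probability distribution P_S on 𝒮, and every real ℓ ≥ 0, there exist finite sets 𝒰_n, 𝒳_n, 𝒴_n and a sequence {(φ_n*, ψ_n*)}_{n≥1} of encoder/decoder pairs that asymptotically realizes a (2,2)-threshold scheme with correlation level ℓ for which the following limits exist and take the stated values: lim_{n→∞} (1/n) log₂|𝒳_n| = lim_{n→∞} (1/n) log₂|𝒴_n| = lim_{n→∞} (1/n) log₂|𝒰_n| = H(S)+ℓ, and lim_{n→∞} −(1/n) log₂ P_n^X = lim_{n→∞} −(1/n) log₂ P_n^Y = ℓ. -/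
open Finset Filter Real
open scoped BigOperators

noncomputable section

/-- `p` is a probability mass function on a finite type. -/
def IsPMF {α : Type*} [Fintype α] (p : α → ℝ) : Prop :=
  (∀ a, 0 ≤ p a) ∧ ∑ a, p a = 1

open scoped Classical in
/-- The distribution (pushforward pmf) of a random variable `X`
defined on a finite sample space carrying the pmf `p`. -/
def distOf {Ω α : Type*} [Fintype Ω] (p : Ω → ℝ) (X : Ω → α) (x : α) : ℝ :=
  ∑ ω ∈ Finset.univ.filter fun ω => X ω = x, p ω

/-- Base-2 Shannon entropy of a pmf on a finite type
(the convention `0 · log₂ 0 = 0` holds since `Real.logb 2 0 = 0`). -/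
def ent {α : Type*} [Fintype α] (q : α → ℝ) : ℝ :=
  -∑ x, q x * Real.logb 2 (q x)

/-- Base-2 entropy `H(X)` of a random variable `X` under pmf `p`. -/
def entRV {Ω α : Type*} [Fintype Ω] [Fintype α] (p : Ω → ℝ) (X : Ω → α) : ℝ :=
  ent (distOf p X)

/-- Base-2 conditional entropy `H(X|Y) = H(X,Y) − H(Y)`. -/
def condEnt {Ω α β : Type*} [Fintype Ω] [Fintype α] [Fintype β]
    (p : Ω → ℝ) (X : Ω → α) (Y : Ω → β) : ℝ :=
  entRV p (fun ω => (X ω, Y ω)) - entRV p Y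

/-- Base-2 mutual information `I(X;Y) = H(X) + H(Y) − H(X,Y)`. -/
def MI {Ω α β : Type*} [Fintype Ω] [Fintype α] [Fintype β]
    (p : Ω → ℝ) (X : Ω → α) (Y : Ω → β) : ℝ :=
  entRV p X + entRV p Y - entRV p (fun ω => (X ω, Y ω))

/-- `X` and `Y` are independent random variables under the pmf `p`. -/
def IndepRV {Ω α β : Type*} [Fintype Ω] (p : Ω → ℝ) (X : Ω → α) (Y : Ω → β) : Prop :=
  ∀ a b, distOf p (fun ω => (X ω, Y ω)) (a, b) = distOf p X a * distOf p Y b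

/-- An encoder/decoder sequence for the asymptotic (2,2)-threshold setup:
for each `n`, a finite nonempty randomness alphabet `U n`, finite share
alphabets `X n` and `Y n`, a deterministic encoder `enc n` mapping the `n`
secrets and the uniform random number to the two shares, and a decoder
`dec n` (`none` plays the role of the detection symbol `⊥`). -/
structure Scheme22 (𝒮 : Type) where
  U : ℕ → Type
  X : ℕ → Type
  Y : ℕ → Type
  fU : ∀ n, Fintype (U n)
  fX : ∀ n, Fintype (X n)
  fY : ∀ n, Fintype (Y n)
  neU : ∀ n, Nonempty (U n)
  enc : ∀ n, (Fin n → 𝒮) → U n → X n × Y n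
  dec : ∀ n, X n × Y n → Option (Fin n → 𝒮)

attribute [instance] Scheme22.fU Scheme22.fX Scheme22.fY Scheme22.neU

variable {𝒮 : Type} [Fintype 𝒮]

/-- The joint pmf of `(Sⁿ, Uₙ)` on `(Fin n → 𝒮) × C.U n`:
`Sⁿ` is i.i.d. with marginal `PS`, and `Uₙ` is uniform and independent of `Sⁿ`. -/
def jp (C : Scheme22 𝒮) (PS : 𝒮 → ℝ) (n : ℕ) : (Fin n → 𝒮) × C.U n → ℝ :=
  fun ω => (∏ i, PS (ω.1 i)) / (Fintype.card (C.U n) : ℝ)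

/-- The secret `Sⁿ` as a random variable. -/
def Sn (C : Scheme22 𝒮) (n : ℕ) : (Fin n → 𝒮) × C.U n → (Fin n → 𝒮) := Prod.fst

/-- The share `Xₙ` as a random variable. -/
def Xn (C : Scheme22 𝒮) (n : ℕ) : (Fin n → 𝒮) × C.U n → C.X n :=
  fun ω => (C.enc n ω.1 ω.2).1

/-- The share `Yₙ` as a random variable. -/
def Yn (C : Scheme22 𝒮) (n : ℕ) : (Fin n → 𝒮) × C.U n → C.Y n :=
  fun ω => (C.enc n ω.1 ω.2).2

open scoped Classical in
/-- The acceptance region `𝒜ₙ` of the decoder. -/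
def AccRegion (C : Scheme22 𝒮) (n : ℕ) : Finset (C.X n × C.Y n) :=
  Finset.univ.filter fun xy => C.dec n xy ≠ none

open scoped Classical in
/-- The decoding error probability `Pₙᵉ = Pr{ψₙ(φₙ(Sⁿ,Uₙ)) ≠ Sⁿ}`. -/
def Pe (C : Scheme22 𝒮) (PS : 𝒮 → ℝ) (n : ℕ) : ℝ :=
  ∑ ω ∈ Finset.univ.filter
      (fun ω : (Fin n → 𝒮) × C.U n => C.dec n (C.enc n ω.1 ω.2) ≠ some ω.1),
    jp C PS n ω

/-- `Pₙˣ`: the maximal success probability of impersonating participant 1,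
the supremum over all forging distributions `Q` on `𝒳ₙ`. -/
def PimpX (C : Scheme22 𝒮) (PS : 𝒮 → ℝ) (n : ℕ) : ℝ :=
  ⨆ Q : {Q : C.X n → ℝ // IsPMF Q},
    ∑ xy ∈ AccRegion C n, Q.1 xy.1 * distOf (jp C PS n) (Yn C n) xy.2

/-- `Pₙʸ`: the maximal success probability of impersonating participant 2. -/
def PimpY (C : Scheme22 𝒮) (PS : 𝒮 → ℝ) (n : ℕ) : ℝ :=
  ⨆ Q : {Q : C.Y n → ℝ // IsPMF Q},
    ∑ xy ∈ AccRegion C n, distOf (jp C PS n) (Xn C n) xy.1 * Q.1 xy.2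

/-- The sequence `{(φₙ,ψₙ)}` asymptotically realizes a (2,2)-threshold scheme
with correlation level `ℓ`: vanishing decoding error probability, vanishing
normalized leakage `I(Sⁿ;Xₙ)/n` and `I(Sⁿ;Yₙ)/n`, and `I(Xₙ;Yₙ)/n → ℓ`. -/
def Realizes (C : Scheme22 𝒮) (PS : 𝒮 → ℝ) (ℓ : ℝ) : Prop :=
  Tendsto (fun n => Pe C PS n) atTop (nhds 0) ∧
  Tendsto (fun n => MI (jp C PS n) (Sn C n) (Xn C n) / (n : ℝ)) atTop (nhds 0) ∧
  Tendsto (fun n => MI (jp C PS n) (Sn C n) (Yn C n) / (n : ℝ)) atTop (nhds 0) ∧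
  Tendsto (fun n => MI (jp C PS n) (Xn C n) (Yn C n) / (n : ℝ)) atTop (nhds ℓ)

/-!
**Idea.** Compress `Sⁿ` to an index `f(Sⁿ)` in a group `M` with `log₂ |M| ≈ n H(S)` (its typical
sequences get distinct indices), and let the random number be a pair `(u, k) ∈ M × K` with
`log₂ |K| ≈ n ℓ`. The shares are `X = (u, k)` and `Y = (u + f(Sⁿ), k)`, and the decoder accepts
exactly when the two keys `k` agree. Each share is uniform and independent of `Sⁿ`, so nothing
leaks; a forged share carries the right key with probability exactly `1 / |K|`; and
`I(X; Y) = log₂ |M × K| - H(f(Sⁿ))`, where `H(f(Sⁿ)) ≈ n H(S)` by asymptotic equipartition.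
-/

open Function
open scoped Topology

/-! ### Probability mass functions on finite types -/

section Distributions

variable {Ω α β : Type*} [Fintype Ω]

lemma sum_distOf_mul [Fintype α] (p : Ω → ℝ) (X : Ω → α) (F : α → ℝ) :
    ∑ x, distOf p X x * F x = ∑ ω, p ω * F (X ω) := by
  classical
  simp only [distOf, sum_mul]
  rw [← sum_fiberwise univ X]
  exact sum_congr rfl fun x _ => sum_congr (by congr) fun ω hω => by rw [(mem_filter.1 hω).2]

lemma distOf_comp_of_injective (p : Ω → ℝ) (X : Ω → α) {e : α → β} (he : Injective e) (x : α) :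
    distOf p (fun ω => e (X ω)) (e x) = distOf p X x :=
  sum_congr (by ext; simp [he.eq_iff]) fun _ _ => rfl

lemma distOf_apply_of_fiber_eq (p : Ω → ℝ) {X : Ω → α} {ω : Ω}
    (hω : ∀ ω', X ω' = X ω → ω' = ω) : distOf p X (X ω) = p ω := by
  classical
  have hfiber : (univ.filter fun ω' => X ω' = X ω) = {ω} := by
    ext ω'
    simpa using ⟨hω ω', fun h => h ▸ rfl⟩
  rw [← sum_singleton p ω, ← hfiber]
  exact sum_congr (by congr) fun _ _ => rfl

lemma isPMF_distOf [Fintype α] {p : Ω → ℝ} (hp : IsPMF p) (X : Ω → α) : IsPMF (distOf p X) :=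
  ⟨fun _ => sum_nonneg fun ω _ => hp.1 ω, by simpa [hp.2] using sum_distOf_mul p X fun _ => 1⟩

lemma IsPMF.nonempty {p : Ω → ℝ} (hp : IsPMF p) : Nonempty Ω := by
  by_contra h
  rw [not_nonempty_iff] at h
  simpa using hp.2

lemma IsPMF.le_one {p : Ω → ℝ} (hp : IsPMF p) (ω : Ω) : p ω ≤ 1 :=
  hp.2 ▸ single_le_sum (fun a _ => hp.1 a) (mem_univ ω)

lemma isPMF_uniform [Nonempty Ω] : IsPMF fun _ : Ω => 1 / (Fintype.card Ω : ℝ) :=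
  ⟨fun _ => by positivity, by simp⟩

end Distributions

/-! ### Entropy -/

section Entropy

variable {Ω α β : Type*} [Fintype Ω]

/-- The self-information `-log₂ q(a)`, which is `0` (not `∞`) where `q` vanishes. -/
def selfInfo {α : Type*} (q : α → ℝ) (a : α) : ℝ := -logb 2 (q a)

lemma ent_eq_sum_mul_selfInfo (q : Ω → ℝ) : ent q = ∑ a, q a * selfInfo q a := by
  simp [ent, selfInfo]

lemma entRV_eq_sum_mul_selfInfo [Fintype α] (p : Ω → ℝ) (X : Ω → α) :
    entRV p X = ∑ ω, p ω * selfInfo (distOf p X) (X ω) := by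
  rw [entRV, ent_eq_sum_mul_selfInfo, sum_distOf_mul]

lemma IsPMF.selfInfo_nonneg {q : Ω → ℝ} (hq : IsPMF q) (a : Ω) : 0 ≤ selfInfo q a :=
  neg_nonneg.2 (logb_nonpos one_lt_two (hq.1 a) (hq.le_one a))

lemma IsPMF.ent_nonneg {q : Ω → ℝ} (hq : IsPMF q) : 0 ≤ ent q := by
  rw [ent_eq_sum_mul_selfInfo]
  exact sum_nonneg fun a _ => mul_nonneg (hq.1 a) (hq.selfInfo_nonneg a)

lemma ent_uniform [Nonempty Ω] :
    ent (fun _ : Ω => 1 / (Fintype.card Ω : ℝ)) = logb 2 (Fintype.card Ω) := by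
  simp [ent]

lemma IsPMF.ent_le_logb_card {q : Ω → ℝ} (hq : IsPMF q) : ent q ≤ logb 2 (Fintype.card Ω) := by
  have := hq.nonempty
  set N : ℝ := (Fintype.card Ω : ℝ) with hN
  have hN0 : 0 < N := by positivity
  have jensen : ∑ a, N⁻¹ * negMulLog (q a) ≤ negMulLog N⁻¹ := by
    have := concaveOn_negMulLog.le_map_sum (t := univ) (w := fun _ : Ω => N⁻¹) (p := q)
      (fun _ _ => by positivity) (by simp [hN]) fun a _ => hq.1 a
    simpa [← mul_sum, hq.2] using this
  rw [← mul_sum, negMulLog, log_inv, neg_mul_neg, mul_le_mul_iff_right₀ (inv_pos.2 hN0)] at jensen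
  calc ent q = (∑ a, negMulLog (q a)) / log 2 := by
        simp only [ent, logb, negMulLog, neg_mul, sum_neg_distrib, sum_div, neg_div, mul_div_assoc]
    _ ≤ logb 2 N := div_le_div_of_nonneg_right jensen (log_nonneg one_le_two)

lemma IsPMF.entRV_le_logb_card [Fintype α] {p : Ω → ℝ} (hp : IsPMF p) (X : Ω → α) :
    entRV p X ≤ logb 2 (Fintype.card α) :=
  (isPMF_distOf hp X).ent_le_logb_card

lemma entRV_comp_of_injective [Fintype α] [Fintype β] (p : Ω → ℝ) (X : Ω → α) {e : α → β}
    (he : Injective e) : entRV p (fun ω => e (X ω)) = entRV p X := by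
  simp only [entRV_eq_sum_mul_selfInfo, selfInfo, distOf_comp_of_injective p X he]

lemma entRV_of_injective [Fintype α] (p : Ω → ℝ) {X : Ω → α} (hX : Injective X) :
    entRV p X = ent p := by
  simp only [entRV_eq_sum_mul_selfInfo, ent_eq_sum_mul_selfInfo, selfInfo,
    fun ω => distOf_apply_of_fiber_eq p (X := X) (ω := ω) fun _ h => hX h]

lemma IsPMF.sum_mul_selfInfo_le_entRV [Fintype α] {p : Ω → ℝ} (hp : IsPMF p) {X : Ω → α}
    {T : Finset Ω} (hT : ∀ ω ∈ T, ∀ ω', X ω' = X ω → ω' = ω) :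
    ∑ ω ∈ T, p ω * selfInfo p ω ≤ entRV p X := by
  calc ∑ ω ∈ T, p ω * selfInfo p ω = ∑ ω ∈ T, p ω * selfInfo (distOf p X) (X ω) :=
        sum_congr rfl fun ω hω => by
          rw [selfInfo, selfInfo, distOf_apply_of_fiber_eq p (hT ω hω)]
    _ ≤ ∑ ω, p ω * selfInfo (distOf p X) (X ω) :=
        sum_le_univ_sum_of_nonneg fun ω =>
          mul_nonneg (hp.1 ω) ((isPMF_distOf hp X).selfInfo_nonneg _)
    _ = entRV p X := (entRV_eq_sum_mul_selfInfo p X).symm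

end Entropy

/-! ### Product distributions -/

section Product

variable {ι : Type*} [Fintype ι] {α : ι → Type*}

/-- The product of the mass functions `p i`: the joint distribution of independent random
variables with these distributions. -/
def piPMF (p : ∀ i, α i → ℝ) (s : ∀ i, α i) : ℝ := ∏ i, p i (s i)

lemma selfInfo_piPMF {p : ∀ i, α i → ℝ} {s : ∀ i, α i} (hs : piPMF p s ≠ 0) :
    selfInfo (piPMF p) s = ∑ i, selfInfo (p i) (s i) := by
  simp only [selfInfo, piPMF, logb, sum_neg_distrib, ← sum_div]
  rw [log_prod (prod_ne_zero_iff.1 hs)]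

variable [DecidableEq ι] [∀ i, Fintype (α i)] {p : ∀ i, α i → ℝ}

lemma sum_piPMF_mul_prod (p F : ∀ i, α i → ℝ) :
    ∑ s, piPMF p s * ∏ i, F i (s i) = ∏ i, ∑ a, p i a * F i a := by
  simp only [piPMF, ← prod_mul_distrib, prod_univ_sum, Fintype.piFinset_univ]

lemma isPMF_piPMF (hp : ∀ i, IsPMF (p i)) : IsPMF (piPMF p) :=
  ⟨fun s => prod_nonneg fun i _ => (hp i).1 (s i), by
    simpa [(hp _).2] using sum_piPMF_mul_prod p fun _ _ => 1⟩

lemma sum_piPMF_mul_apply (hp : ∀ i, IsPMF (p i)) (i : ι) (g : α i → ℝ) :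
    ∑ s, piPMF p s * g (s i) = ∑ a, p i a * g a := by
  have h := sum_piPMF_mul_prod p (update (fun _ _ => 1) i g)
  rw [Fintype.prod_eq_single i fun j hj => by simp [update_of_ne hj, (hp j).2]] at h
  simp only [update_self] at h
  rw [← h]
  refine sum_congr rfl fun s _ => ?_
  rw [Fintype.prod_eq_single i fun j hj => by simp [update_of_ne hj], update_self]

lemma sum_piPMF_mul_apply_mul_apply (hp : ∀ i, IsPMF (p i)) {i j : ι} (hij : i ≠ j)
    (g : α i → ℝ) (h : α j → ℝ) :
    ∑ s, piPMF p s * (g (s i) * h (s j)) = (∑ a, p i a * g a) * ∑ a, p j a * h a := by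
  have key := sum_piPMF_mul_prod p (update (update (fun _ _ => 1) j h) i g)
  rw [Fintype.prod_eq_mul i j hij fun k hk => by
    simp [update_of_ne hk.1, update_of_ne hk.2, (hp k).2]] at key
  simp only [update_self, update_of_ne hij.symm] at key
  rw [← key]
  refine sum_congr rfl fun s _ => ?_
  rw [Fintype.prod_eq_mul i j hij fun k hk => by simp [update_of_ne hk.1, update_of_ne hk.2],
    update_self, update_of_ne hij.symm, update_self]

lemma sum_piPMF_mul_sq_sum (hp : ∀ i, IsPMF (p i)) {g : ∀ i, α i → ℝ}
    (hg : ∀ i, ∑ a, p i a * g i a = 0) :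
    ∑ s, piPMF p s * (∑ i, g i (s i)) ^ 2 = ∑ i, ∑ a, p i a * g i a ^ 2 := by
  have hcov : ∀ i j, ∑ s, piPMF p s * (g i (s i) * g j (s j)) =
      if i = j then ∑ a, p i a * g i a ^ 2 else 0 := by
    intro i j
    split_ifs with hij
    · subst hij
      simpa only [← sq, if_true] using sum_piPMF_mul_apply hp i fun a => g i a ^ 2
    · rw [sum_piPMF_mul_apply_mul_apply hp hij, hg i, zero_mul]
  calc ∑ s, piPMF p s * (∑ i, g i (s i)) ^ 2
      = ∑ s, ∑ i, ∑ j, piPMF p s * (g i (s i) * g j (s j)) := by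
        simp_rw [sq, Fintype.sum_mul_sum, mul_sum]
    _ = ∑ i, ∑ j, ∑ s, piPMF p s * (g i (s i) * g j (s j)) := by
        rw [sum_comm]
        exact sum_congr rfl fun i _ => sum_comm
    _ = ∑ i, ∑ a, p i a * g i a ^ 2 := by simp [hcov]

lemma ent_piPMF (hp : ∀ i, IsPMF (p i)) : ent (piPMF p) = ∑ i, ent (p i) := by
  calc ent (piPMF p) = ∑ s, piPMF p s * ∑ i, selfInfo (p i) (s i) := by
        rw [ent_eq_sum_mul_selfInfo]
        refine sum_congr rfl fun s _ => ?_
        by_cases hs : piPMF p s = 0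
        · simp [hs]
        · rw [selfInfo_piPMF hs]
    _ = ∑ i, ∑ s, piPMF p s * selfInfo (p i) (s i) := by simp only [mul_sum]; exact sum_comm
    _ = ∑ i, ent (p i) := by
        simp only [sum_piPMF_mul_apply hp _ (selfInfo (p _)), ent_eq_sum_mul_selfInfo]

/-- The variance of the self-information of a mass function, also known as its varentropy. -/
def varent {α : Type*} [Fintype α] (q : α → ℝ) : ℝ := ∑ a, q a * (selfInfo q a - ent q) ^ 2

lemma varent_piPMF (hp : ∀ i, IsPMF (p i)) : varent (piPMF p) = ∑ i, varent (p i) := by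
  have hcenter : ∀ i, ∑ a, p i a * (selfInfo (p i) a - ent (p i)) = 0 := fun i => by
    simp only [mul_sub, sum_sub_distrib, ← sum_mul, (hp i).2, ← ent_eq_sum_mul_selfInfo, one_mul,
      sub_self]
  rw [varent, ent_piPMF hp]
  refine Eq.trans (sum_congr rfl fun s _ => ?_) (sum_piPMF_mul_sq_sum hp hcenter)
  by_cases hs : piPMF p s = 0
  · simp [hs]
  · rw [selfInfo_piPMF hs, ← sum_sub_distrib]

end Product

/-! ### Asymptotic equipartition and source coding -/

section TypicalSet

variable {α : Type*} [Fintype α] {q : α → ℝ} {δ : ℝ}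

open scoped Classical in
/-- The `δ`-typical set: the outcomes of positive probability whose self-information is within `δ`
of the entropy. -/
def typicalSet (q : α → ℝ) (δ : ℝ) : Finset α :=
  univ.filter fun a => q a ≠ 0 ∧ |selfInfo q a - ent q| ≤ δ

lemma mem_typicalSet {a : α} : a ∈ typicalSet q δ ↔ q a ≠ 0 ∧ |selfInfo q a - ent q| ≤ δ := by
  simp [typicalSet]

open scoped Classical in
lemma sum_compl_typicalSet_le (hq : IsPMF q) (hδ : 0 < δ) :
    ∑ a ∈ (typicalSet q δ)ᶜ, q a ≤ varent q / δ ^ 2 := by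
  have chebyshev : ∀ a ∈ (typicalSet q δ)ᶜ, q a * δ ^ 2 ≤ q a * (selfInfo q a - ent q) ^ 2 := by
    intro a ha
    rw [mem_compl, mem_typicalSet, not_and, not_le] at ha
    by_cases ha0 : q a = 0
    · simp [ha0]
    · exact mul_le_mul_of_nonneg_left
        (sq_le_sq.2 ((abs_of_pos hδ).trans_le (ha ha0).le)) (hq.1 a)
  rw [le_div_iff₀ (by positivity), sum_mul]
  exact (sum_le_sum chebyshev).trans
    (sum_le_univ_sum_of_nonneg fun a => mul_nonneg (hq.1 a) (sq_nonneg _))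

lemma card_typicalSet_le (hq : IsPMF q) : (#(typicalSet q δ) : ℝ) ≤ 2 ^ (ent q + δ) := by
  have hprob : ∀ a ∈ typicalSet q δ, (2 : ℝ) ^ (-(ent q + δ)) ≤ q a := by
    intro a ha
    rw [mem_typicalSet, selfInfo] at ha
    rw [← le_logb_iff_rpow_le one_lt_two ((hq.1 a).lt_of_ne' ha.1)]
    linarith [(abs_le.1 ha.2).2]
  have hsum := (card_nsmul_le_sum _ q _ hprob).trans (sum_le_univ_sum_of_nonneg hq.1)
  rwa [hq.2, nsmul_eq_mul, rpow_neg zero_le_two, ← div_eq_mul_inv, div_le_one (by positivity)]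
    at hsum

end TypicalSet

lemma logb_add_one_le {x h : ℝ} (hx : 0 ≤ x) (hh : 0 ≤ h) (hxh : x ≤ 2 ^ h) :
    logb 2 (x + 1) ≤ h + 1 := by
  rw [logb_le_iff_le_rpow one_lt_two (by positivity), rpow_add_one two_ne_zero]
  linarith [one_le_rpow one_le_two hh]

section SourceCoding

variable {α : Type*}

lemma exists_indexing [Nonempty α] (T : Finset α) :
    ∃ (f : α → Fin (#T + 1)) (g : Fin (#T + 1) → α),
      ∀ a ∈ T, g (f a) = a ∧ ∀ a', f a' = f a → a' = a := by
  classical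
  refine ⟨fun a => if h : a ∈ T then (T.equivFin ⟨a, h⟩).succ else 0,
    Fin.cases (Classical.arbitrary α) fun i => T.equivFin.symm i, fun a ha => ⟨by simp [ha], ?_⟩⟩
  intro a' h
  by_cases ha' : a' ∈ T
  · simpa [ha, ha'] using h
  · simp only [ha, ha', dite_true, dite_false] at h
    exact absurd h.symm (Fin.succ_ne_zero _)

open scoped Classical in
/-- The error probability of the source code with encoder `f` and decoder `g` for a source with
mass function `q`. -/
def codeErrorProb {β : Type*} [Fintype α] (q : α → ℝ) (f : α → β) (g : β → α) : ℝ :=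
  ∑ a with g (f a) ≠ a, q a

variable [Fintype α]

lemma codeErrorProb_nonneg {β : Type*} {q : α → ℝ} (hq : IsPMF q) (f : α → β) (g : β → α) :
    0 ≤ codeErrorProb q f g :=
  sum_nonneg fun a _ => hq.1 a

lemma exists_code_of_varent {q : α → ℝ} (hq : IsPMF q) {δ : ℝ} (hδ : 0 < δ) :
    ∃ (m : ℕ) (f : α → Fin (m + 1)) (g : Fin (m + 1) → α),
      codeErrorProb q f g ≤ varent q / δ ^ 2 ∧
      (1 - varent q / δ ^ 2) * ent q - δ ≤ entRV q f ∧
      logb 2 (m + 1) ≤ ent q + δ + 1 := by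
  classical
  have := hq.nonempty
  set T := typicalSet q δ
  have hT : ∑ a ∈ Tᶜ, q a ≤ varent q / δ ^ 2 := sum_compl_typicalSet_le hq hδ
  have hT0 : 0 ≤ ∑ a ∈ Tᶜ, q a := sum_nonneg fun a _ => hq.1 a
  have hT1 : ∑ a ∈ T, q a = 1 - ∑ a ∈ Tᶜ, q a := by rw [← hq.2, ← sum_add_sum_compl T]; ring
  obtain ⟨f, g, hfg⟩ := exists_indexing T
  refine ⟨#T, f, g, le_trans ?_ hT, ?_, ?_⟩
  · refine sum_le_sum_of_subset_of_nonneg (fun a ha => ?_) fun a _ _ => hq.1 a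
    exact mem_compl.2 fun haT => (mem_filter.1 ha).2 (hfg a haT).1
  · calc (1 - varent q / δ ^ 2) * ent q - δ ≤ (∑ a ∈ T, q a) * (ent q - δ) := by
          rw [hT1]
          nlinarith [mul_le_mul_of_nonneg_right hT hq.ent_nonneg, mul_nonneg hT0 hδ.le]
      _ ≤ ∑ a ∈ T, q a * selfInfo q a := by
          rw [sum_mul]
          refine sum_le_sum fun a ha => mul_le_mul_of_nonneg_left ?_ (hq.1 a)
          linarith [(abs_le.1 (mem_typicalSet.1 ha).2).1]
      _ ≤ entRV q f := hq.sum_mul_selfInfo_le_entRV fun a ha => (hfg a ha).2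
  · exact logb_add_one_le (by positivity) (add_nonneg hq.ent_nonneg hδ.le) (card_typicalSet_le hq)

lemma exists_deviation_seq :
    ∃ δ : ℕ → ℝ, (∀ n, 0 < δ n) ∧ Tendsto (fun n => δ n / n) atTop (𝓝 0) ∧
      Tendsto (fun n => n / δ n ^ 2) atTop (𝓝 0) := by
  have hpow : ∀ {y : ℝ}, 0 < y → Tendsto (fun n : ℕ => (n : ℝ) ^ (-y)) atTop (𝓝 0) :=
    fun hy => (tendsto_rpow_neg_atTop hy).comp tendsto_natCast_atTop_atTop
  -- Any exponent strictly between `1 / 2` and `1` would do; the summand `1` keeps `δ 0` positive.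
  refine ⟨fun n => 1 + (n : ℝ) ^ (3 / 4 : ℝ), fun n => by positivity, ?_, ?_⟩
  · have h := tendsto_one_div_atTop_nhds_zero_nat.add (hpow (y := 1 / 4) (by norm_num))
    rw [add_zero] at h
    refine h.congr' ?_
    filter_upwards [eventually_gt_atTop 0] with n hn
    have hn' : (0 : ℝ) < n := by exact_mod_cast hn
    rw [add_div, ← rpow_sub_one hn'.ne']
    norm_num
  · refine squeeze_zero' (.of_forall fun n => by positivity) ?_ (hpow (y := 1 / 2) (by norm_num))
    filter_upwards [eventually_gt_atTop 0] with n hn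
    have hn' : (0 : ℝ) < n := by exact_mod_cast hn
    calc (n : ℝ) / (1 + (n : ℝ) ^ (3 / 4 : ℝ)) ^ 2 ≤ n / ((n : ℝ) ^ (3 / 4 : ℝ)) ^ 2 := by
          gcongr
          linarith
      _ = (n : ℝ) ^ (-(1 / 2) : ℝ) := by
          rw [← rpow_natCast, ← rpow_mul hn'.le, div_eq_mul_inv, ← rpow_neg hn'.le,
            ← rpow_one_add' hn'.le (by norm_num)]
          norm_num

lemma tendsto_div_of_linear_bounds {x ε δ : ℕ → ℝ} {h : ℝ} (hε : Tendsto ε atTop (𝓝 0))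
    (hδ : Tendsto (fun n => δ n / n) atTop (𝓝 0)) (hlow : ∀ n, (1 - ε n) * (n * h) - δ n ≤ x n)
    (hhigh : ∀ n, x n ≤ n * h + δ n + 1) : Tendsto (fun n => x n / n) atTop (𝓝 h) := by
  have hpos : ∀ᶠ n : ℕ in atTop, (0 : ℝ) < n := tendsto_natCast_atTop_atTop.eventually_gt_atTop 0
  have hlower : Tendsto (fun n : ℕ => (1 - ε n) * h - δ n / n) atTop (𝓝 h) := by
    simpa using ((hε.const_sub 1).mul_const h).sub hδ
  have hupper : Tendsto (fun n : ℕ => h + δ n / n + 1 / n) atTop (𝓝 h) := by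
    simpa using (hδ.const_add h).add tendsto_one_div_atTop_nhds_zero_nat
  refine tendsto_of_tendsto_of_tendsto_of_le_of_le' hlower hupper
    (hpos.mono fun n hn => ?_) (hpos.mono fun n hn => ?_)
  · have hdiv := div_le_div_of_nonneg_right (hlow n) hn.le
    rwa [sub_div, mul_left_comm, mul_div_cancel_left₀ _ hn.ne'] at hdiv
  · have hdiv := div_le_div_of_nonneg_right (hhigh n) hn.le
    rwa [add_div, add_div, mul_div_cancel_left₀ _ hn.ne'] at hdiv

lemma exists_source_code {p : α → ℝ} (hp : IsPMF p) :
    ∃ (m : ℕ → ℕ) (f : ∀ n, (Fin n → α) → Fin (m n + 1)) (g : ∀ n, Fin (m n + 1) → Fin n → α),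
      Tendsto (fun n => codeErrorProb (piPMF fun _ => p) (f n) (g n)) atTop (𝓝 0) ∧
      Tendsto (fun n => entRV (piPMF fun _ => p) (f n) / n) atTop (𝓝 (ent p)) ∧
      Tendsto (fun n => logb 2 (m n + 1) / n) atTop (𝓝 (ent p)) := by
  obtain ⟨δ, hδ, hδn, hnδ⟩ := exists_deviation_seq
  have hq : ∀ n, IsPMF (piPMF fun _ : Fin n => p) := fun n => isPMF_piPMF fun _ => hp
  have hent : ∀ n, ent (piPMF fun _ : Fin n => p) = n * ent p := fun n => by
    simp [ent_piPMF fun _ : Fin n => hp]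
  have hvarent : ∀ n, varent (piPMF fun _ : Fin n => p) = n * varent p := fun n => by
    simp [varent_piPMF fun _ : Fin n => hp]
  choose m f g herr hlow hhigh using fun n => exists_code_of_varent (hq n) (hδ n)
  simp only [hent, hvarent] at herr hlow hhigh
  have herr0 : Tendsto (fun n : ℕ => n * varent p / δ n ^ 2) atTop (𝓝 0) := by
    simpa [mul_div_right_comm] using hnδ.mul_const (varent p)
  have hmid : ∀ n, entRV (piPMF fun _ => p) (f n) ≤ logb 2 (m n + 1) := fun n => by
    simpa using (hq n).entRV_le_logb_card (f n)
  exact ⟨m, f, g, squeeze_zero (fun n => codeErrorProb_nonneg (hq n) _ _) herr herr0,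
    tendsto_div_of_linear_bounds herr0 hδn hlow fun n => (hmid n).trans (hhigh n),
    tendsto_div_of_linear_bounds herr0 hδn (fun n => (hlow n).trans (hmid n)) hhigh⟩

lemma exists_seq_tendsto_logb_div {ℓ : ℝ} (hℓ : 0 ≤ ℓ) :
    ∃ k : ℕ → ℕ, Tendsto (fun n => logb 2 (k n + 1) / n) atTop (𝓝 ℓ) := by
  refine ⟨fun n => ⌊(2 : ℝ) ^ (n * ℓ)⌋₊, tendsto_div_of_linear_bounds (ε := 0) (δ := 0)
    tendsto_const_nhds (by simp) (fun n => ?_) fun n => ?_⟩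
  · simpa using (le_logb_iff_rpow_le one_lt_two (by positivity)).2 (Nat.lt_floor_add_one _).le
  · simpa using logb_add_one_le (Nat.cast_nonneg _) (by positivity)
      (Nat.floor_le (a := (2 : ℝ) ^ (n * ℓ)) (by positivity))

end SourceCoding

/-! ### Uniform randomization -/

section ProdUniform

variable {A U : Type*} [Fintype A] [Fintype U] {p : A → ℝ}

/-- The joint distribution of a variable with mass function `p` and an independent uniformly
distributed element of `U`. -/
def prodUniform (p : A → ℝ) (U : Type*) [Fintype U] (ω : A × U) : ℝ := p ω.1 / Fintype.card U

lemma distOf_prodUniform_perm (hp : IsPMF p) (e : A → Equiv.Perm U) :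
    distOf (prodUniform p U) (fun ω => e ω.1 ω.2) = fun _ => 1 / (Fintype.card U : ℝ) := by
  classical
  funext y
  simp only [distOf, prodUniform, sum_filter, Fintype.sum_prod_type, ← Equiv.eq_symm_apply]
  simp [← sum_div, hp.2]

lemma distOf_prodUniform_prodMk {α : Type*} (p : A → ℝ) (X : A → α) :
    distOf (prodUniform p U) (fun ω => (X ω.1, ω.2)) = prodUniform (distOf p X) U := by
  classical
  funext ⟨x, u⟩
  simp only [distOf, prodUniform, sum_filter, Fintype.sum_prod_type, Prod.mk.injEq, ite_and]
  simp [← sum_filter, sum_div]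

lemma sum_filter_prodUniform [Nonempty U] (p : A → ℝ) (Q : A → Prop) [DecidablePred Q] :
    ∑ ω : A × U with Q ω.1, prodUniform p U ω = ∑ a with Q a, p a := by
  simp only [prodUniform, sum_filter, Fintype.sum_prod_type, sum_const, card_univ, nsmul_eq_mul]
  exact sum_congr rfl fun a _ => by split_ifs <;> simp [mul_div_cancel₀]

variable [Nonempty U]

lemma ent_prodUniform (hp : IsPMF p) :
    ent (prodUniform p U) = ent p + logb 2 (Fintype.card U) := by
  have hU : (Fintype.card U : ℝ) ≠ 0 := by positivity
  have hterm : ∀ a, Fintype.card U * (p a / Fintype.card U * logb 2 (p a / Fintype.card U)) =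
      p a * logb 2 (p a) - p a * logb 2 (Fintype.card U) := fun a => by
    by_cases ha : p a = 0
    · simp [ha]
    · rw [logb_div ha hU]
      field_simp
  simp only [ent, prodUniform, Fintype.sum_prod_type, sum_const, card_univ, nsmul_eq_mul, hterm,
    sum_sub_distrib, ← sum_mul, hp.2]
  ring

lemma entRV_prodUniform_perm (hp : IsPMF p) (e : A → Equiv.Perm U) :
    entRV (prodUniform p U) (fun ω => e ω.1 ω.2) = logb 2 (Fintype.card U) := by
  rw [entRV, distOf_prodUniform_perm hp, ent_uniform]

lemma entRV_prodUniform_prodMk {α : Type*} [Fintype α] (hp : IsPMF p) (X : A → α) :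
    entRV (prodUniform p U) (fun ω => (X ω.1, ω.2)) = entRV p X + logb 2 (Fintype.card U) := by
  rw [entRV, distOf_prodUniform_prodMk, ent_prodUniform (isPMF_distOf hp X), entRV]

lemma entRV_prodUniform_fst (p : A → ℝ) : entRV (prodUniform p U) Prod.fst = ent p := by
  classical
  rw [entRV]
  congr 1
  funext a
  exact (sum_filter_prodUniform p fun b => b = a).trans (by simp [sum_filter])

lemma MI_prodUniform_fst_perm (hp : IsPMF p) (e : A → Equiv.Perm U) :
    MI (prodUniform p U) Prod.fst (fun ω => e ω.1 ω.2) = 0 := by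
  have hinj : Injective fun ω : A × U => (ω.1, e ω.1 ω.2) := by
    rintro ⟨a, u⟩ ⟨b, v⟩ h
    simp only [Prod.mk.injEq] at h
    obtain ⟨rfl, huv⟩ := h
    rw [(e a).injective huv]
  rw [MI, entRV_prodUniform_fst, entRV_prodUniform_perm hp, entRV_of_injective _ hinj,
    ent_prodUniform hp, sub_self]

end ProdUniform

/-! ### The one-time pad with an authentication key -/

section Impersonation

variable {α : Type} [Fintype α] {C : Scheme22 α} {p : α → ℝ} {n : ℕ} {c : ℝ}

open scoped Classical in
lemma PimpX_eq_of_forall [Nonempty (C.X n)]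
    (h : ∀ x, ∑ y with C.dec n (x, y) ≠ none, distOf (jp C p n) (Yn C n) y = c) :
    PimpX C p n = c := by
  have hQ : ∀ Q : {Q : C.X n → ℝ // IsPMF Q},
      ∑ xy ∈ AccRegion C n, Q.1 xy.1 * distOf (jp C p n) (Yn C n) xy.2 = c := fun Q => by
    simp only [AccRegion, sum_filter, Fintype.sum_prod_type, ← mul_ite_zero, ← mul_sum] at h ⊢
    simp only [h, ← sum_mul, Q.2.2, one_mul]
  have : Nonempty {Q : C.X n → ℝ // IsPMF Q} := ⟨_, isPMF_uniform⟩
  rw [PimpX, iSup_congr hQ, ciSup_const]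

open scoped Classical in
lemma PimpY_eq_of_forall [Nonempty (C.Y n)]
    (h : ∀ y, ∑ x with C.dec n (x, y) ≠ none, distOf (jp C p n) (Xn C n) x = c) :
    PimpY C p n = c := by
  have hQ : ∀ Q : {Q : C.Y n → ℝ // IsPMF Q},
      ∑ xy ∈ AccRegion C n, distOf (jp C p n) (Xn C n) xy.1 * Q.1 xy.2 = c := fun Q => by
    simp only [AccRegion, sum_filter, Fintype.sum_prod_type_right, ← ite_zero_mul, ← sum_mul] at h ⊢
    simp only [h, ← mul_sum, Q.2.2, mul_one]
  have : Nonempty {Q : C.Y n → ℝ // IsPMF Q} := ⟨_, isPMF_uniform⟩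
  rw [PimpY, iSup_congr hQ, ciSup_const]

end Impersonation

section Pad

variable {M K : Type*}

/-- Translation by `c` in the first coordinate: one-time-pad encryption of `c`, leaving the
authentication key in the second coordinate alone. -/
def padPerm [AddGroup M] (c : M) : Equiv.Perm (M × K) := (Equiv.addRight c).prodCongr (.refl K)

variable [Fintype M] [Fintype K]

lemma sum_uniform_of_snd_eq [Nonempty M] [DecidableEq K] (k : K) :
    ∑ x : M × K with x.2 = k, 1 / (Fintype.card (M × K) : ℝ) = 1 / Fintype.card K := by
  rw [sum_filter, Fintype.sum_prod_type]
  simp only [sum_ite_eq', mem_univ, if_true, sum_const, card_univ, nsmul_eq_mul,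
    Fintype.card_prod, Nat.cast_mul]
  field_simp

lemma MI_prodUniform_snd_padPerm {A : Type*} [Fintype A] [AddGroup M] [Nonempty K] {p : A → ℝ}
    (hp : IsPMF p) (f : A → M) :
    MI (prodUniform p (M × K)) Prod.snd (fun ω => padPerm (f ω.1) ω.2) =
      logb 2 (Fintype.card (M × K)) - entRV p f := by
  have hinj : Injective fun z : M × M × K => (z.2, padPerm z.1 z.2) := by
    rintro ⟨c, u, k⟩ ⟨c', u', k'⟩ h
    obtain ⟨⟨rfl, rfl⟩, hc⟩ : (u = u' ∧ k = k') ∧ u + c = u' + c' ∧ k = k' := by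
      simpa [padPerm, and_comm] using h
    rw [add_left_cancel hc.1]
  have hcomp := entRV_comp_of_injective (prodUniform p (M × K)) (fun ω => (f ω.1, ω.2)) hinj
  have hjoint : entRV (prodUniform p (M × K)) (fun ω => (ω.2, padPerm (f ω.1) ω.2)) =
      entRV p f + logb 2 (Fintype.card (M × K)) :=
    hcomp.trans (entRV_prodUniform_prodMk hp f)
  have hsnd : entRV (prodUniform p (M × K)) Prod.snd = logb 2 (Fintype.card (M × K)) :=
    entRV_prodUniform_perm hp fun _ => Equiv.refl _
  have hpad : entRV (prodUniform p (M × K)) (fun ω => padPerm (f ω.1) ω.2) =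
      logb 2 (Fintype.card (M × K)) := entRV_prodUniform_perm hp fun a => padPerm (f a)
  rw [MI, hjoint, hsnd, hpad]
  ring

end Pad

section PadScheme

variable {α : Type} {M K : ℕ → Type} [∀ n, AddGroup (M n)] [∀ n, Fintype (M n)]
  [∀ n, Fintype (K n)] [∀ n, Nonempty (K n)] [∀ n, DecidableEq (K n)]

/-- The scheme built from the source code `(f, g)` with index groups `M` and from the key sets `K`:
one share is the random number `(u, k)`, the other one is `(u + f(s), k)`, and the decoder
rejects unless the keys of both shares agree. -/
abbrev padScheme (K : ℕ → Type) [∀ n, Fintype (K n)] [∀ n, Nonempty (K n)] [∀ n, DecidableEq (K n)]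
    (f : ∀ n, (Fin n → α) → M n) (g : ∀ n, M n → Fin n → α) : Scheme22 α where
  U n := M n × K n
  X n := M n × K n
  Y n := M n × K n
  fU _ := inferInstance
  fX _ := inferInstance
  fY _ := inferInstance
  neU _ := inferInstance
  enc n s u := (u, padPerm (f n s) u)
  dec n xy := if xy.1.2 = xy.2.2 then some (g n (-xy.1.1 + xy.2.1)) else none

variable {f : ∀ n, (Fin n → α) → M n} {g : ∀ n, M n → Fin n → α} {p : α → ℝ} {n : ℕ}

lemma padScheme_dec_ne_none {x y : M n × K n} :
    (padScheme K f g).dec n (x, y) ≠ none ↔ x.2 = y.2 := by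
  simp

lemma padScheme_dec_enc (s : Fin n → α) (u : M n × K n) :
    (padScheme K f g).dec n ((padScheme K f g).enc n s u) = some (g n (f n s)) := by
  simp [padPerm]

variable [Fintype α]

lemma Pe_padScheme : Pe (padScheme K f g) p n = codeErrorProb (piPMF fun _ => p) (f n) (g n) := by
  classical
  calc Pe (padScheme K f g) p n
    _ = ∑ ω : (Fin n → α) × M n × K n with g n (f n ω.1) ≠ ω.1,
          prodUniform (piPMF fun _ => p) (M n × K n) ω :=
      sum_congr (filter_congr fun ω _ => by
        rw [padScheme_dec_enc, (Option.some_injective _).ne_iff]) fun _ _ => rfl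
    _ = ∑ s with g n (f n s) ≠ s, piPMF (fun _ => p) s :=
      sum_filter_prodUniform (piPMF fun _ => p) fun s => g n (f n s) ≠ s
    _ = codeErrorProb (piPMF fun _ => p) (f n) (g n) := sum_congr (by congr) fun _ _ => rfl

lemma MI_Sn_Xn_padScheme (hp : IsPMF p) :
    MI (jp (padScheme K f g) p n) (Sn _ n) (Xn _ n) = 0 :=
  MI_prodUniform_fst_perm (isPMF_piPMF fun _ => hp) fun _ => Equiv.refl (M n × K n)

lemma MI_Sn_Yn_padScheme (hp : IsPMF p) :
    MI (jp (padScheme K f g) p n) (Sn _ n) (Yn _ n) = 0 :=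
  MI_prodUniform_fst_perm (isPMF_piPMF fun _ => hp) fun s => padPerm (f n s)

lemma MI_Xn_Yn_padScheme (hp : IsPMF p) :
    MI (jp (padScheme K f g) p n) (Xn _ n) (Yn _ n) =
      logb 2 (Fintype.card (M n × K n)) - entRV (piPMF fun _ => p) (f n) :=
  MI_prodUniform_snd_padPerm (isPMF_piPMF fun _ => hp) (f n)

lemma distOf_Xn_padScheme (hp : IsPMF p) :
    distOf (jp (padScheme K f g) p n) (Xn _ n) = fun _ => 1 / (Fintype.card (M n × K n) : ℝ) :=
  distOf_prodUniform_perm (isPMF_piPMF fun _ => hp) fun _ => Equiv.refl (M n × K n)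

lemma distOf_Yn_padScheme (hp : IsPMF p) :
    distOf (jp (padScheme K f g) p n) (Yn _ n) = fun _ => 1 / (Fintype.card (M n × K n) : ℝ) :=
  distOf_prodUniform_perm (isPMF_piPMF fun _ => hp) fun s => padPerm (f n s)

lemma PimpX_padScheme (hp : IsPMF p) : PimpX (padScheme K f g) p n = 1 / Fintype.card (K n) := by
  refine PimpX_eq_of_forall fun x => ?_
  rw [distOf_Yn_padScheme hp, ← sum_uniform_of_snd_eq (M := M n) x.2]
  exact sum_congr (filter_congr fun y _ => padScheme_dec_ne_none.trans eq_comm) fun _ _ => rfl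

lemma PimpY_padScheme (hp : IsPMF p) : PimpY (padScheme K f g) p n = 1 / Fintype.card (K n) := by
  refine PimpY_eq_of_forall fun y => ?_
  rw [distOf_Xn_padScheme hp, ← sum_uniform_of_snd_eq (M := M n) y.2]
  exact sum_congr (filter_congr fun x _ => padScheme_dec_ne_none) fun _ _ => rfl

end PadScheme

/-- optimality with limits: for every source distribution
and every `ℓ ≥ 0`, there is a sequence of encoder/decoder pairs asymptotically
realizing a (2,2)-threshold scheme with correlation level `ℓ` for which the
rates of both shares and of the random number converge to `H(S)+ℓ` and the
exponents of both impersonation success probabilities converge to `ℓ`. -/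
theorem statement4 {𝒮 : Type} [Fintype 𝒮] (PS : 𝒮 → ℝ) (hPS : IsPMF PS)
    (ℓ : ℝ) (hℓ : 0 ≤ ℓ) :
    ∃ C : Scheme22 𝒮, Realizes C PS ℓ ∧
      Tendsto (fun n => Real.logb 2 (Fintype.card (C.X n)) / (n : ℝ)) atTop
        (nhds (ent PS + ℓ)) ∧
      Tendsto (fun n => Real.logb 2 (Fintype.card (C.Y n)) / (n : ℝ)) atTop
        (nhds (ent PS + ℓ)) ∧
      Tendsto (fun n => Real.logb 2 (Fintype.card (C.U n)) / (n : ℝ)) atTop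
        (nhds (ent PS + ℓ)) ∧
      Tendsto (fun n => -Real.logb 2 (PimpX C PS n) / (n : ℝ)) atTop (nhds ℓ) ∧
      Tendsto (fun n => -Real.logb 2 (PimpY C PS n) / (n : ℝ)) atTop (nhds ℓ) := by
  obtain ⟨m, f, g, herr, hent, hm⟩ := exists_source_code hPS
  obtain ⟨k, hk⟩ := exists_seq_tendsto_logb_div hℓ
  have hrate : Tendsto (fun n => logb 2 (Fintype.card (Fin (m n + 1) × Fin (k n + 1))) / n)
      atTop (𝓝 (ent PS + ℓ)) := (hm.add hk).congr fun n => by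
    simp [← add_div, logb_mul (x := (m n : ℝ) + 1) (by positivity) (Nat.cast_add_one_ne_zero _)]
  refine ⟨padScheme (fun n => Fin (k n + 1)) f g, ⟨?_, ?_, ?_, ?_⟩, hrate, hrate, hrate, ?_, ?_⟩
  · simpa only [Pe_padScheme] using herr
  · simp [MI_Sn_Xn_padScheme hPS]
  · simp [MI_Sn_Yn_padScheme hPS]
  · simpa only [MI_Xn_Yn_padScheme hPS, sub_div, add_sub_cancel_left] using hrate.sub hent
  · simpa [PimpX_padScheme hPS] using hk
  · simpa [PimpY_padScheme hPS] using hk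
end
end

section
/- Let (X,Y) be a pair of random variables taking values in finite sets 𝒳 × 𝒴, let A ⊆ 𝒳 × 𝒴, and set α = Pr{(X,Y) ∉ A}, β = Σ_{(x,y)∈A} P_X(x)P_Y(y), P^X = max over probability distributions Q on 𝒳 of Σ_{(x,y)∈A} Q(x)P_Y(y), and P^Y = max over probability distributions Q on 𝒴 of Σ_{(x,y)∈A} P_X(x)Q(y). Then P^X ≥ β, P^Y ≥ β, and if β > 0, I(X;Y) ≥ −h(α) + (1−α) · max{ −log₂ P^X , −log₂ P^Y }, where h(p) = −p log₂ p − (1−p) log₂(1−p) is the binary entropy function. -/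
open Finset Filter Real
open scoped BigOperators

noncomputable section

/-- The `𝒳`-marginal of a joint distribution on `𝒳 × 𝒴`. -/
def margX {𝒳 𝒴 : Type*} [Fintype 𝒴] (q : 𝒳 × 𝒴 → ℝ) : 𝒳 → ℝ :=
  fun x => ∑ y, q (x, y)

/-- The `𝒴`-marginal of a joint distribution on `𝒳 × 𝒴`. -/
def margY {𝒳 𝒴 : Type*} [Fintype 𝒳] (q : 𝒳 × 𝒴 → ℝ) : 𝒴 → ℝ :=
  fun y => ∑ x, q (x, y)

/-- Base-2 mutual information of a joint distribution on `𝒳 × 𝒴`. -/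
def miDist {𝒳 𝒴 : Type*} [Fintype 𝒳] [Fintype 𝒴] (q : 𝒳 × 𝒴 → ℝ) : ℝ :=
  ent (margX q) + ent (margY q) - ent q

/-- The binary entropy function `h(a) = −a log₂ a − (1−a) log₂ (1−a)`. -/
def binEnt (a : ℝ) : ℝ :=
  -(a * Real.logb 2 a) - (1 - a) * Real.logb 2 (1 - a)

/-!
The mutual information is the relative entropy `D(P_XY ‖ P_X × P_Y)`. By the log-sum inequality,
merging the outcomes into the two cells `A` and `Aᶜ` can only decrease it, to
`(1 - α) log ((1 - α) / β) + α log (α / (1 - β))`, and `1 - β ≤ 1` bounds this below by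
`-h(α) - (1 - α) log β`. Since `P_X` and `P_Y` are themselves admissible forging distributions,
`β ≤ P^X` and `β ≤ P^Y`, so `-log β` dominates both `-log P^X` and `-log P^Y`.
-/

theorem IsPMF.sum_le_one {ι : Type*} [Fintype ι] {P : ι → ℝ} (hP : IsPMF P) (s : Finset ι) :
    ∑ i ∈ s, P i ≤ 1 :=
  hP.2 ▸ sum_le_univ_sum_of_nonneg hP.1

theorem IsPMF.le_one_s8 {ι : Type*} [Fintype ι] {P : ι → ℝ} (hP : IsPMF P) (i : ι) : P i ≤ 1 := by
  simpa using hP.sum_le_one {i}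

theorem IsPMF.sum_mul_le_iSup {ι κ : Type*} [Fintype κ] {P : κ → ℝ} (hP : IsPMF P)
    (s : Finset ι) (f : ι → κ) (w : ι → ℝ) :
    ∑ i ∈ s, P (f i) * w i ≤ ⨆ Q : {Q : κ → ℝ // IsPMF Q}, ∑ i ∈ s, Q.1 (f i) * w i := by
  refine le_ciSup (f := fun Q : {Q : κ → ℝ // IsPMF Q} => ∑ i ∈ s, Q.1 (f i) * w i)
    ⟨∑ i ∈ s, |w i|, ?_⟩ ⟨P, hP⟩
  rintro _ ⟨⟨Q, hQ⟩, rfl⟩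
  refine sum_le_sum fun i _ => ?_
  calc Q (f i) * w i ≤ Q (f i) * |w i| := mul_le_mul_of_nonneg_left (le_abs_self _) (hQ.1 _)
    _ ≤ |w i| := mul_le_of_le_one_left (abs_nonneg _) (hQ.le_one_s8 _)

section RelEntropy

variable {ι : Type*} {P Q : ι → ℝ}

-- Jensen's inequality for `x ↦ x * log x` at the points `P i / Q i` with weights `Q i`.
theorem sum_mul_log_sum_div_sum_le {s : Finset ι} (hP : ∀ i ∈ s, 0 ≤ P i) (hQ : ∀ i ∈ s, 0 ≤ Q i)
    (hPQ : ∀ i ∈ s, Q i = 0 → P i = 0) :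
    (∑ i ∈ s, P i) * log ((∑ i ∈ s, P i) / ∑ i ∈ s, Q i) ≤ ∑ i ∈ s, P i * log (P i / Q i) := by
  rcases (sum_nonneg hQ).eq_or_lt' with hQs | hQs
  · have hPs : ∀ i ∈ s, P i = 0 := fun i hi => hPQ i hi ((sum_eq_zero_iff_of_nonneg hQ).1 hQs i hi)
    rw [sum_eq_zero hPs, zero_mul]
    exact (sum_eq_zero fun i hi => by rw [hPs i hi, zero_mul]).ge
  · have jensen := convexOn_mul_log.map_centerMass_le hQ hQs
      (p := fun i => P i / Q i) fun i hi => div_nonneg (hP i hi) (hQ i hi)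
    have cancel (c : ι → ℝ) :
        ∑ i ∈ s, Q i * (P i / Q i * c i) = ∑ i ∈ s, P i * c i :=
      sum_congr rfl fun i hi => by rw [← mul_assoc, mul_div_cancel_of_imp' (hPQ i hi)]
    have cancel_one : ∑ i ∈ s, Q i * (P i / Q i) = ∑ i ∈ s, P i := by
      simpa only [mul_one] using cancel fun _ => 1
    simp only [centerMass, smul_eq_mul, Function.comp_apply, cancel, cancel_one, inv_mul_eq_div]
      at jensen
    rwa [div_mul_eq_mul_div, div_le_div_iff_of_pos_right hQs] at jensen

/-- The base-2 relative entropy (Kullback–Leibler divergence) `D(P‖Q)` on a finite type. It is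
meaningful only if `P` vanishes wherever `Q` does: terms with `Q i = 0 < P i`, which ought to be
infinite, count as `0`. -/
def relEntropy [Fintype ι] (P Q : ι → ℝ) : ℝ :=
  ∑ i, P i * logb 2 (P i / Q i)

theorem sum_mul_logb_sum_div_sum_le {b : ℝ} (hb : 1 < b) {s : Finset ι} (hP : ∀ i ∈ s, 0 ≤ P i)
    (hQ : ∀ i ∈ s, 0 ≤ Q i) (hPQ : ∀ i ∈ s, Q i = 0 → P i = 0) :
    (∑ i ∈ s, P i) * logb b ((∑ i ∈ s, P i) / ∑ i ∈ s, Q i)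
      ≤ ∑ i ∈ s, P i * logb b (P i / Q i) := by
  simp only [logb, ← mul_div_assoc, ← sum_div]
  exact div_le_div_of_nonneg_right (sum_mul_log_sum_div_sum_le hP hQ hPQ) (log_pos hb).le

theorem mul_logb_div_eq {x y : ℝ} (b : ℝ) (h : y = 0 → x = 0) :
    x * logb b (x / y) = x * logb b x - x * logb b y := by
  rcases eq_or_ne x 0 with rfl | hx
  · simp
  · rw [logb_div hx (mt h hx), mul_sub]

theorem neg_binEnt_sub_mul_logb_le_relEntropy [Fintype ι] [DecidableEq ι] (hP : IsPMF P)
    (hQ : IsPMF Q) (hPQ : ∀ i, Q i = 0 → P i = 0) (A : Finset ι) :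
    -binEnt (∑ i ∈ Aᶜ, P i) - (1 - ∑ i ∈ Aᶜ, P i) * logb 2 (∑ i ∈ A, Q i) ≤ relEntropy P Q := by
  have cell (s : Finset ι) :
      (∑ i ∈ s, P i) * logb 2 (∑ i ∈ s, P i) - (∑ i ∈ s, P i) * logb 2 (∑ i ∈ s, Q i)
        ≤ ∑ i ∈ s, P i * logb 2 (P i / Q i) := by
    rw [← mul_logb_div_eq]
    · exact sum_mul_logb_sum_div_sum_le one_lt_two (fun i _ => hP.1 i) (fun i _ => hQ.1 i)
        fun i _ => hPQ i
    · intro h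
      exact sum_eq_zero fun i hi =>
        hPQ i ((sum_eq_zero_iff_of_nonneg fun i _ => hQ.1 i).1 h i hi)
  have hQc : (∑ i ∈ Aᶜ, P i) * logb 2 (∑ i ∈ Aᶜ, Q i) ≤ 0 :=
    mul_nonpos_of_nonneg_of_nonpos (sum_nonneg fun i _ => hP.1 i)
      (logb_nonpos one_lt_two (sum_nonneg fun i _ => hQ.1 i) (hQ.sum_le_one _))
  have hsplit := sum_add_sum_compl A fun i => P i * logb 2 (P i / Q i)
  have hPA : 1 - ∑ i ∈ Aᶜ, P i = ∑ i ∈ A, P i := by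
    rw [sub_eq_iff_eq_add, sum_add_sum_compl, hP.2]
  rw [binEnt, hPA, relEntropy]
  linarith [cell A, cell Aᶜ]

end RelEntropy

section Joint

variable {𝒳 𝒴 : Type*} {q : 𝒳 × 𝒴 → ℝ}

theorem margX_nonneg [Fintype 𝒴] (hq : ∀ z, 0 ≤ q z) (x : 𝒳) : 0 ≤ margX q x :=
  sum_nonneg fun y _ => hq (x, y)

theorem margY_nonneg [Fintype 𝒳] (hq : ∀ z, 0 ≤ q z) (y : 𝒴) : 0 ≤ margY q y :=
  sum_nonneg fun x _ => hq (x, y)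

theorem le_margX [Fintype 𝒴] (hq : ∀ z, 0 ≤ q z) (z : 𝒳 × 𝒴) : q z ≤ margX q z.1 :=
  single_le_sum (f := fun y => q (z.1, y)) (fun y _ => hq (z.1, y)) (mem_univ z.2)

theorem le_margY [Fintype 𝒳] (hq : ∀ z, 0 ≤ q z) (z : 𝒳 × 𝒴) : q z ≤ margY q z.2 :=
  single_le_sum (f := fun x => q (x, z.2)) (fun x _ => hq (x, z.2)) (mem_univ z.1)

theorem eq_zero_of_margX_mul_margY_eq_zero [Fintype 𝒳] [Fintype 𝒴] (hq : ∀ z, 0 ≤ q z)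
    (z : 𝒳 × 𝒴) (h : margX q z.1 * margY q z.2 = 0) : q z = 0 := by
  rcases mul_eq_zero.1 h with h | h
  · exact le_antisymm (h ▸ le_margX hq z) (hq z)
  · exact le_antisymm (h ▸ le_margY hq z) (hq z)

variable [Fintype 𝒳] [Fintype 𝒴]

theorem IsPMF.margX (hq : IsPMF q) : IsPMF (margX q) :=
  ⟨margX_nonneg hq.1, by rw [← hq.2, Fintype.sum_prod_type]; rfl⟩

theorem IsPMF.margY (hq : IsPMF q) : IsPMF (margY q) :=
  ⟨margY_nonneg hq.1, by rw [← hq.2, Fintype.sum_prod_type_right]; rfl⟩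

theorem IsPMF.prod {P : 𝒳 → ℝ} {Q : 𝒴 → ℝ} (hP : IsPMF P) (hQ : IsPMF Q) :
    IsPMF fun z : 𝒳 × 𝒴 => P z.1 * Q z.2 :=
  ⟨fun z => mul_nonneg (hP.1 z.1) (hQ.1 z.2), by
    rw [Fintype.sum_prod_type, ← Fintype.sum_mul_sum, hP.2, hQ.2, one_mul]⟩

theorem sum_margX_mul (f : 𝒳 → ℝ) : ∑ x, margX q x * f x = ∑ z, q z * f z.1 := by
  simp only [margX, sum_mul, Fintype.sum_prod_type]

theorem sum_margY_mul (f : 𝒴 → ℝ) : ∑ y, margY q y * f y = ∑ z, q z * f z.2 := by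
  simp only [margY, sum_mul, Fintype.sum_prod_type_right]

theorem miDist_eq_relEntropy (hq : ∀ z, 0 ≤ q z) :
    miDist q = relEntropy q fun z => margX q z.1 * margY q z.2 := by
  simp only [miDist, ent, relEntropy, sum_margX_mul, sum_margY_mul, ← sum_neg_distrib,
    ← sum_add_distrib, ← sum_sub_distrib]
  refine sum_congr rfl fun z _ => ?_
  rcases (hq z).eq_or_lt' with hz | hz
  · simp [hz]
  · have hX := hz.trans_le (le_margX hq z)
    have hY := hz.trans_le (le_margY hq z)
    rw [logb_div hz.ne' (mul_pos hX hY).ne', logb_mul hX.ne' hY.ne']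
    ring

theorem neg_binEnt_sub_mul_logb_le_miDist [DecidableEq 𝒳] [DecidableEq 𝒴] (hq : IsPMF q)
    (A : Finset (𝒳 × 𝒴)) :
    -binEnt (∑ z ∈ Aᶜ, q z) - (1 - ∑ z ∈ Aᶜ, q z) * logb 2 (∑ z ∈ A, margX q z.1 * margY q z.2)
      ≤ miDist q :=
  miDist_eq_relEntropy hq.1 ▸ neg_binEnt_sub_mul_logb_le_relEntropy hq (hq.margX.prod hq.margY)
    (eq_zero_of_margX_mul_margY_eq_zero hq.1) A

end Joint

section RandomVariables

variable {Ω 𝒳 𝒴 : Type*} [Fintype Ω] {p : Ω → ℝ}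

open scoped Classical in
theorem sum_distOf (p : Ω → ℝ) (X : Ω → 𝒳) (s : Finset 𝒳) :
    ∑ x ∈ s, distOf p X x = ∑ ω with X ω ∈ s, p ω :=
  sum_fiberwise_eq_sum_filter univ s X p

theorem IsPMF.distOf [Fintype 𝒳] (hp : IsPMF p) (X : Ω → 𝒳) : IsPMF (distOf p X) :=
  ⟨fun _ => sum_nonneg fun ω _ => hp.1 ω, by simpa [sum_distOf] using hp.2⟩

theorem margX_distOf [Fintype 𝒴] (p : Ω → ℝ) (X : Ω → 𝒳) (Y : Ω → 𝒴) :
    margX (distOf p fun ω => (X ω, Y ω)) = distOf p X := by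
  classical
  ext x
  have h := sum_distOf p (fun ω => (X ω, Y ω)) ({x} ×ˢ univ)
  simp only [sum_product, sum_singleton, mem_product, mem_singleton, mem_univ, and_true] at h
  exact h

theorem margY_distOf [Fintype 𝒳] (p : Ω → ℝ) (X : Ω → 𝒳) (Y : Ω → 𝒴) :
    margY (distOf p fun ω => (X ω, Y ω)) = distOf p Y := by
  classical
  ext y
  have h := sum_distOf p (fun ω => (X ω, Y ω)) (univ ×ˢ {y})
  simp only [sum_product, sum_singleton, mem_product, mem_singleton, mem_univ, true_and] at h
  exact h

theorem MI_eq_miDist [Fintype 𝒳] [Fintype 𝒴] (p : Ω → ℝ) (X : Ω → 𝒳) (Y : Ω → 𝒴) :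
    MI p X Y = miDist (distOf p fun ω => (X ω, Y ω)) := by
  simp only [MI, miDist, entRV, margX_distOf, margY_distOf]

open scoped Classical in
theorem neg_binEnt_sub_mul_logb_le_MI [Fintype 𝒳] [Fintype 𝒴] (hp : IsPMF p) (X : Ω → 𝒳)
    (Y : Ω → 𝒴) (A : Finset (𝒳 × 𝒴)) :
    -binEnt (∑ ω with (X ω, Y ω) ∉ A, p ω) - (1 - ∑ ω with (X ω, Y ω) ∉ A, p ω) *
      logb 2 (∑ z ∈ A, distOf p X z.1 * distOf p Y z.2) ≤ MI p X Y := by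
  simpa [MI_eq_miDist, margX_distOf, margY_distOf, sum_distOf] using
    neg_binEnt_sub_mul_logb_le_miDist (hp.distOf fun ω => (X ω, Y ω)) A

end RandomVariables

open scoped Classical in
/-- for random variables `X`, `Y` and an acceptance region
`A`, with `α = Pr{(X,Y) ∉ A}`, `β = (P_X×P_Y)(A)` and impersonation success
probabilities `Pˣ`, `Pʸ` (suprema over forging distributions), one has
`Pˣ ≥ β`, `Pʸ ≥ β`, and if `β > 0` then
`I(X;Y) ≥ −h(α) + (1−α)·max{−log₂ Pˣ, −log₂ Pʸ}`. -/
theorem statement8 {Ω 𝒳 𝒴 : Type} [Fintype Ω] [Fintype 𝒳] [Fintype 𝒴]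
    (p : Ω → ℝ) (hp : IsPMF p) (X : Ω → 𝒳) (Y : Ω → 𝒴) (A : Finset (𝒳 × 𝒴))
    (α β PX PY : ℝ)
    (hα : α = ∑ ω ∈ Finset.univ.filter (fun ω => (X ω, Y ω) ∉ A), p ω)
    (hβ : β = ∑ xy ∈ A, distOf p X xy.1 * distOf p Y xy.2)
    (hPX : PX = ⨆ Q : {Q : 𝒳 → ℝ // IsPMF Q},
      ∑ xy ∈ A, Q.1 xy.1 * distOf p Y xy.2)
    (hPY : PY = ⨆ Q : {Q : 𝒴 → ℝ // IsPMF Q},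
      ∑ xy ∈ A, distOf p X xy.1 * Q.1 xy.2) :
    β ≤ PX ∧ β ≤ PY ∧
    (0 < β →
      -binEnt α + (1 - α) * max (-Real.logb 2 PX) (-Real.logb 2 PY)
        ≤ MI p X Y) := by
  have hβX : β ≤ PX := by
    rw [hβ, hPX]
    exact (hp.distOf X).sum_mul_le_iSup A Prod.fst _
  have hβY : β ≤ PY := by
    simp only [hβ, hPY, mul_comm (distOf p X _)]
    exact (hp.distOf Y).sum_mul_le_iSup A Prod.snd _
  refine ⟨hβX, hβY, fun hβpos => ?_⟩
  have hα1 : 0 ≤ 1 - α := sub_nonneg.2 (hα ▸ hp.sum_le_one _)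
  have hmax : max (-logb 2 PX) (-logb 2 PY) ≤ -logb 2 β :=
    max_le (neg_le_neg (logb_le_logb_of_le one_lt_two hβpos hβX))
      (neg_le_neg (logb_le_logb_of_le one_lt_two hβpos hβY))
  calc -binEnt α + (1 - α) * max (-logb 2 PX) (-logb 2 PY)
      ≤ -binEnt α + (1 - α) * -logb 2 β := by gcongr
    _ = -binEnt α - (1 - α) * logb 2 β := by ring
    _ ≤ MI p X Y := hα ▸ hβ ▸ neg_binEnt_sub_mul_logb_le_MI hp X Y A
end
end
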